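/- Let f, g : I → ℝ be strictly monotone and differentiable with f'(x) ≠ 0 and g'(x) ≠ 0 for all x ∈ I, and suppose f and g have opposite monotonicity (one strictly increasing, the other strictly decreasing). Then A^[f] ≤ A^[g] if and only if the function x ↦ f'(x)/g'(x) is non-decreasing on I. -/

import Mathlib

/-!
Replacing `(f, g)` by `(-f, -g)` changes neither the means nor the ratio `f' / g'`, so `f` may be
taken decreasing and `g` increasing. Put `h = f ∘ g⁻¹` on the interval `g(I)`. Applying `f` to
`A^[f](a) ≤ A^[g](a)` and writing `yᵢ = g(aᵢ)` turns it into Jensen's inequality with equal weights,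
`h((y₁ + ⋯ + yₙ)/n) ≤ (h(y₁) + ⋯ + h(yₙ))/n`, which for continuous `h` amounts to convexity. Since
`h` has derivative `f'(x) / g'(x)` at `g(x)`, convexity says that `f' / g'` is non-decreasing along
the increasing function `g`.
-/

open Set Function Filter

/-- The quasi-arithmetic mean generated by `f` on the interval `I`,
applied to a vector `a ∈ Iⁿ`: `f⁻¹((f a₁ + ⋯ + f aₙ)/n)`, where the
inverse of `f` is taken on `I`. -/
noncomputable def qam (I : Set ℝ) (f : ℝ → ℝ) {n : ℕ} (a : Fin n → ℝ) : ℝ :=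
  Function.invFunOn f I ((∑ i, f (a i)) / n)

/-- The natural (pointwise) partial order on quasi-arithmetic means:
`A^[f] ≤ A^[g]` iff `A^[f](a) ≤ A^[g](a)` for every `n ≥ 1` and every `a ∈ Iⁿ`. -/
def qamLE (I : Set ℝ) (f g : ℝ → ℝ) : Prop :=
  ∀ n : ℕ, 1 ≤ n → ∀ a : Fin n → ℝ, (∀ i, a i ∈ I) → qam I f a ≤ qam I g a

/-- `A^[f] = A^[g]` : equality of the two quasi-arithmetic means as means. -/
def qamEQ (I : Set ℝ) (f g : ℝ → ℝ) : Prop :=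
  ∀ n : ℕ, 1 ≤ n → ∀ a : Fin n → ℝ, (∀ i, a i ∈ I) → qam I f a = qam I g a

/-- `f` is strictly monotone on `I` (strictly increasing or strictly decreasing). -/
def StrictMonoOrAntiOn (f : ℝ → ℝ) (I : Set ℝ) : Prop :=
  StrictMonoOn f I ∨ StrictAntiOn f I

open scoped Topology

section InverseOnImage

lemma ordConnected_image_of_continuousOn {α β : Type*}
    [ConditionallyCompleteLinearOrder α] [TopologicalSpace α] [OrderTopology α] [DenselyOrdered α]
    [LinearOrder β] [TopologicalSpace β] [OrderClosedTopology β]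
    {s : Set α} (hs : s.OrdConnected) {f : α → β} (hf : ContinuousOn f s) :
    (f '' s).OrdConnected :=
  (hs.isPreconnected.image f hf).ordConnected

lemma invFunOn_neg_apply_neg {α β : Type*} [Nonempty α] [InvolutiveNeg β] (f : α → β) (s : Set α)
    (b : β) : invFunOn (-f) s (-b) = invFunOn f s b := by
  unfold invFunOn
  congr! 3 <;> simp only [Pi.neg_apply, neg_inj]

lemma monotoneOn_comp_invFunOn_image_iff {α β γ : Type*} [LinearOrder α] [Nonempty α] [Preorder β]
    [Preorder γ] {g : α → β} {s : Set α} (hg : StrictMonoOn g s) {φ : α → γ} :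
    MonotoneOn (φ ∘ invFunOn g s) (g '' s) ↔ MonotoneOn φ s := by
  have hinv : LeftInvOn (invFunOn g s) g s := hg.injOn.leftInvOn_invFunOn
  simp only [MonotoneOn, forall_mem_image, comp_apply]
  refine forall₂_congr fun x hx => forall₂_congr fun y hy => ?_
  rw [hinv hx, hinv hy, hg.le_iff_le hx hy]

lemma continuousOn_invFunOn_of_strictMonoOn {α β : Type*}
    [LinearOrder α] [TopologicalSpace α] [OrderTopology α] [Nonempty α]
    [LinearOrder β] [TopologicalSpace β] [OrderTopology β]
    {g : α → β} {s : Set α} (hg : StrictMonoOn g s) (hs : s.OrdConnected)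
    (hgs : (g '' s).OrdConnected) : ContinuousOn (invFunOn g s) (g '' s) := by
  have hcont : Continuous (hg.orderIso g s).symm := OrderIso.continuous _
  rw [continuousOn_iff_continuous_domRestrict]
  convert continuous_subtype_val.comp hcont using 1
  ext y
  obtain ⟨x, rfl⟩ := (hg.orderIso g s).surjective y
  rw [comp_apply, OrderIso.symm_apply_apply]
  exact hg.injOn.leftInvOn_invFunOn x.2

lemma hasDerivWithinAt_of_local_left_inverse {𝕜 : Type*} [NontriviallyNormedField 𝕜]
    {f g : 𝕜 → 𝕜} {f' a : 𝕜} {s t : Set 𝕜} (hg : Tendsto g (𝓝[t] a) (𝓝[s] (g a)))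
    (hf : HasDerivWithinAt f f' s (g a)) (hf' : f' ≠ 0) (ha : a ∈ t)
    (hfg : ∀ᶠ y in 𝓝[t] a, f (g y) = y) : HasDerivWithinAt g f'⁻¹ t a :=
  HasFDerivWithinAt.of_local_left_inverse
    (f' := ContinuousLinearEquiv.unitsEquivAut 𝕜 (Units.mk0 f' hf')) hg hf ha hfg

lemma hasDerivWithinAt_comp_invFunOn {s : Set ℝ} (hs : s.OrdConnected) {f g f' g' : ℝ → ℝ}
    (hf : ∀ x ∈ s, HasDerivWithinAt f (f' x) s x) (hg : ∀ x ∈ s, HasDerivWithinAt g (g' x) s x)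
    (hg' : ∀ x ∈ s, g' x ≠ 0) (hgm : StrictMonoOn g s) {y : ℝ} (hy : y ∈ g '' s) :
    HasDerivWithinAt (f ∘ invFunOn g s) (((fun x => f' x / g' x) ∘ invFunOn g s) y) (g '' s) y := by
  have hx : invFunOn g s y ∈ s := invFunOn_mem hy
  have hmaps : MapsTo (invFunOn g s) (g '' s) s := fun _ hz => invFunOn_mem hz
  have himage : (g '' s).OrdConnected :=
    ordConnected_image_of_continuousOn hs (HasDerivWithinAt.continuousOn hg)
  have hcont := continuousOn_invFunOn_of_strictMonoOn hgm hs himage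
  have hinv : HasDerivWithinAt (invFunOn g s) (g' (invFunOn g s y))⁻¹ (g '' s) y :=
    hasDerivWithinAt_of_local_left_inverse ((hcont y hy).tendsto_nhdsWithin hmaps) (hg _ hx)
      (hg' _ hx) hy (eventually_nhdsWithin_of_forall fun _ hz => invFunOn_eq hz)
  simpa only [comp_apply, div_eq_mul_inv] using (hf _ hx).comp y hinv hmaps

end InverseOnImage

lemma convexOn_iff_monotoneOn_of_hasDerivWithinAt {s : Set ℝ} (hs : Convex ℝ s) {h h' : ℝ → ℝ}
    (hh : ∀ x ∈ s, HasDerivWithinAt h (h' x) s x) : ConvexOn ℝ s h ↔ MonotoneOn h' s := by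
  constructor
  · intro hconv x hx y hy hxy
    rcases hxy.eq_or_lt with rfl | hlt
    · exact le_rfl
    · exact (hconv.le_slope_of_hasDerivWithinAt hx hy hlt (hh x hx)).trans
        (hconv.slope_le_of_hasDerivWithinAt hx hy hlt (hh y hy))
  · intro hmono
    have hderiv : ∀ x ∈ interior s, HasDerivAt h (h' x) x := fun x hx =>
      (hh x (interior_subset hx)).hasDerivAt (mem_interior_iff_mem_nhds.1 hx)
    exact MonotoneOn.convexOn_of_deriv hs (HasDerivWithinAt.continuousOn hh)
      (fun x hx => (hderiv x hx).differentiableAt.differentiableWithinAt)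
      ((hmono.mono interior_subset).congr fun x hx => (hderiv x hx).deriv.symm)

section EqualWeights

variable {E β : Type*} [AddCommGroup E] [Module ℝ E]

lemma convex_inv_smul_sum_mem {s : Set E} (hs : Convex ℝ s) {n : ℕ} (hn : 1 ≤ n) {y : Fin n → E}
    (hy : ∀ i, y i ∈ s) : (n : ℝ)⁻¹ • ∑ i, y i ∈ s := by
  have hn₀ : (n : ℝ) ≠ 0 := by positivity
  rw [Finset.smul_sum]
  exact hs.sum_mem (fun _ _ => by positivity) (by simp [hn₀]) fun i _ => hy i

variable [AddCommGroup β] [PartialOrder β] [Module ℝ β]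

/-- Jensen's inequality on `s` restricted to equal weights `1 / n`. Unlike `ConvexOn`, it does not
include convexity of `s`. -/
def MeanConvexOn (s : Set E) (h : E → β) : Prop :=
  ∀ n : ℕ, 1 ≤ n → ∀ y : Fin n → E, (∀ i, y i ∈ s) →
    h ((n : ℝ)⁻¹ • ∑ i, y i) ≤ (n : ℝ)⁻¹ • ∑ i, h (y i)

variable {s : Set E} {h : E → β}

lemma meanConvexOn_of_convexOn [IsOrderedAddMonoid β] [IsStrictOrderedModule ℝ β]
    (hh : ConvexOn ℝ s h) : MeanConvexOn s h := by
  intro n hn y hy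
  have hn₀ : (n : ℝ) ≠ 0 := by positivity
  simp only [Finset.smul_sum]
  exact hh.map_sum_le (fun _ _ => by positivity) (by simp [hn₀]) fun i _ => hy i

lemma MeanConvexOn.map_natCast_div_smul_le (hh : MeanConvexOn s h) {x y : E} (hx : x ∈ s)
    (hy : y ∈ s) {k n : ℕ} (hn : 1 ≤ n) (hkn : k ≤ n) :
    h ((k / n : ℝ) • x + (1 - k / n : ℝ) • y) ≤ (k / n : ℝ) • h x + (1 - k / n : ℝ) • h y := by
  obtain ⟨m, rfl⟩ := Nat.exists_eq_add_of_le hkn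
  have hn₀ : ((k + m : ℕ) : ℝ) ≠ 0 := by positivity
  have hcompl : (1 - k / (k + m : ℕ) : ℝ) = m / (k + m : ℕ) := by
    field_simp
    push_cast
    ring
  have hmean := hh (k + m) hn (Fin.append (fun _ : Fin k => x) fun _ : Fin m => y)
    (Fin.addCases (by simp [hx]) (by simp [hy]))
  simp only [Fin.sum_univ_add, Fin.append_left, Fin.append_right, Finset.sum_const,
    Finset.card_univ, Fintype.card_fin, ← Nat.cast_smul_eq_nsmul ℝ, smul_add, smul_smul,
    ← div_eq_inv_mul] at hmean
  rwa [hcompl]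

variable [TopologicalSpace E] [ContinuousAdd E] [ContinuousSMul ℝ E]
  [TopologicalSpace β] [ContinuousAdd β] [ContinuousSMul ℝ β] [OrderClosedTopology β]

lemma MeanConvexOn.convexOn (hh : MeanConvexOn s h) (hs : Convex ℝ s) (hc : ContinuousOn h s) :
    ConvexOn ℝ s h := by
  refine ⟨hs, fun x hx y hy a b ha hb hab => ?_⟩
  obtain rfl : b = 1 - a := by linarith
  have ha₁ : a ≤ 1 := by linarith
  -- Approximate the weight `a` by `⌊a n⌋ / n`.
  let q : ℕ → ℝ := fun n => (⌊a * n⌋₊ : ℝ) / n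
  have hq : Tendsto q atTop (𝓝 a) :=
    (tendsto_nat_floor_mul_div_atTop ha).comp tendsto_natCast_atTop_atTop
  have hfloor (n : ℕ) : ⌊a * n⌋₊ ≤ n :=
    Nat.floor_le_of_le (mul_le_of_le_one_left n.cast_nonneg ha₁)
  have hmem (n : ℕ) : q n • x + (1 - q n) • y ∈ s :=
    hs hx hy (by positivity)
      (sub_nonneg.2 (div_le_one_of_le₀ (Nat.cast_le.2 (hfloor n)) n.cast_nonneg)) (by ring)
  have hlhs : Tendsto (fun n => h (q n • x + (1 - q n) • y)) atTop (𝓝 (h (a • x + (1 - a) • y))) :=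
    (hc _ (hs hx hy ha hb hab)).tendsto.comp <| tendsto_nhdsWithin_iff.2
      ⟨(hq.smul_const x).add ((hq.const_sub 1).smul_const y), .of_forall hmem⟩
  refine le_of_tendsto_of_tendsto hlhs
    ((hq.smul_const (h x)).add ((hq.const_sub 1).smul_const (h y))) ?_
  filter_upwards [eventually_ge_atTop 1] with n hn
  exact hh.map_natCast_div_smul_le hx hy hn (hfloor n)

lemma meanConvexOn_iff_convexOn [IsOrderedAddMonoid β] [IsStrictOrderedModule ℝ β] (hs : Convex ℝ s)
    (hc : ContinuousOn h s) : MeanConvexOn s h ↔ ConvexOn ℝ s h :=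
  ⟨fun hh => hh.convexOn hs hc, meanConvexOn_of_convexOn⟩

end EqualWeights

section QuasiArithmeticMean

variable {I : Set ℝ} {f g : ℝ → ℝ}

lemma qam_neg (I : Set ℝ) (f : ℝ → ℝ) {n : ℕ} (a : Fin n → ℝ) : qam I (-f) a = qam I f a := by
  simp only [qam, Pi.neg_apply, Finset.sum_neg_distrib, neg_div, invFunOn_neg_apply_neg]

lemma qamLE_neg_neg_iff : qamLE I (-f) (-g) ↔ qamLE I f g := by
  simp only [qamLE, qam_neg]

variable {n : ℕ} {a : Fin n → ℝ}

lemma mean_mem_image (hI : I.OrdConnected) (hf : ContinuousOn f I) (hn : 1 ≤ n)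
    (ha : ∀ i, a i ∈ I) : (∑ i, f (a i)) / n ∈ f '' I := by
  rw [div_eq_inv_mul]
  exact convex_inv_smul_sum_mem (ordConnected_image_of_continuousOn hI hf).convex hn
    fun i => mem_image_of_mem f (ha i)

lemma qam_mem (hI : I.OrdConnected) (hf : ContinuousOn f I) (hn : 1 ≤ n) (ha : ∀ i, a i ∈ I) :
    qam I f a ∈ I :=
  invFunOn_mem (mean_mem_image hI hf hn ha)

lemma apply_qam (hI : I.OrdConnected) (hf : ContinuousOn f I) (hn : 1 ≤ n) (ha : ∀ i, a i ∈ I) :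
    f (qam I f a) = (∑ i, f (a i)) / n :=
  invFunOn_eq (mean_mem_image hI hf hn ha)

lemma qam_le_qam_iff_of_strictAntiOn (hI : I.OrdConnected) (hf : ContinuousOn f I)
    (hg : ContinuousOn g I) (hfa : StrictAntiOn f I) (hn : 1 ≤ n) (ha : ∀ i, a i ∈ I) :
    qam I f a ≤ qam I g a ↔ f (qam I g a) ≤ (∑ i, f (a i)) / n := by
  rw [← apply_qam hI hf hn ha, hfa.le_iff_ge (qam_mem hI hg hn ha) (qam_mem hI hf hn ha)]

lemma qamLE_iff_meanConvexOn (hI : I.OrdConnected) (hf : ContinuousOn f I)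
    (hg : ContinuousOn g I) (hfa : StrictAntiOn f I) (hgi : InjOn g I) :
    qamLE I f g ↔ MeanConvexOn (g '' I) (f ∘ invFunOn g I) := by
  have hinv : LeftInvOn (invFunOn g I) g I := hgi.leftInvOn_invFunOn
  have hjensen {n : ℕ} (hn : 1 ≤ n) {a : Fin n → ℝ} (ha : ∀ i, a i ∈ I) :
      qam I f a ≤ qam I g a ↔ (f ∘ invFunOn g I) ((n : ℝ)⁻¹ • ∑ i, g (a i)) ≤
        (n : ℝ)⁻¹ • ∑ i, (f ∘ invFunOn g I) (g (a i)) := by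
    rw [qam_le_qam_iff_of_strictAntiOn hI hf hg hfa hn ha]
    simp only [qam, comp_apply, hinv (ha _), smul_eq_mul, div_eq_inv_mul]
  constructor
  · intro h n hn y hy
    choose a ha hay using hy
    obtain rfl : (fun i => g (a i)) = y := funext hay
    exact (hjensen hn ha).1 (h n hn a ha)
  · intro h n hn a ha
    exact (hjensen hn ha).2 (h n hn _ fun i => mem_image_of_mem g (ha i))

variable {f' g' : ℝ → ℝ}

lemma qamLE_iff_monotoneOn_div_of_strictAntiOn_of_strictMonoOn (hI : I.OrdConnected)
    (hfd : ∀ x ∈ I, HasDerivWithinAt f (f' x) I x) (hgd : ∀ x ∈ I, HasDerivWithinAt g (g' x) I x)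
    (hg'0 : ∀ x ∈ I, g' x ≠ 0) (hfa : StrictAntiOn f I) (hgm : StrictMonoOn g I) :
    qamLE I f g ↔ MonotoneOn (fun x => f' x / g' x) I := by
  have hf : ContinuousOn f I := HasDerivWithinAt.continuousOn hfd
  have hg : ContinuousOn g I := HasDerivWithinAt.continuousOn hgd
  have hJ : Convex ℝ (g '' I) := (ordConnected_image_of_continuousOn hI hg).convex
  have hderiv := fun y (hy : y ∈ g '' I) => hasDerivWithinAt_comp_invFunOn hI hfd hgd hg'0 hgm hy
  calc
    qamLE I f g ↔ MeanConvexOn (g '' I) (f ∘ invFunOn g I) :=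
      qamLE_iff_meanConvexOn hI hf hg hfa hgm.injOn
    _ ↔ ConvexOn ℝ (g '' I) (f ∘ invFunOn g I) :=
      meanConvexOn_iff_convexOn hJ (HasDerivWithinAt.continuousOn hderiv)
    _ ↔ MonotoneOn ((fun x => f' x / g' x) ∘ invFunOn g I) (g '' I) :=
      convexOn_iff_monotoneOn_of_hasDerivWithinAt hJ hderiv
    _ ↔ MonotoneOn (fun x => f' x / g' x) I := monotoneOn_comp_invFunOn_image_iff hgm

theorem qam_le_iff_deriv_ratio_monotone_opposite_monotonicity_general (hI : I.OrdConnected)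
    (hfd : ∀ x ∈ I, HasDerivWithinAt f (f' x) I x) (hgd : ∀ x ∈ I, HasDerivWithinAt g (g' x) I x)
    (hg'0 : ∀ x ∈ I, g' x ≠ 0)
    (hopp : (StrictMonoOn f I ∧ StrictAntiOn g I) ∨ (StrictAntiOn f I ∧ StrictMonoOn g I)) :
    qamLE I f g ↔ MonotoneOn (fun x => f' x / g' x) I := by
  rcases hopp with ⟨hfm, hga⟩ | ⟨hfa, hgm⟩
  · have hneg : qamLE I (-f) (-g) ↔ MonotoneOn (fun x => -f' x / -g' x) I :=
      qamLE_iff_monotoneOn_div_of_strictAntiOn_of_strictMonoOn hI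
        (fun x hx => (hfd x hx).neg) (fun x hx => (hgd x hx).neg)
        (fun x hx => neg_ne_zero.2 (hg'0 x hx)) hfm.neg hga.neg
    simpa only [qamLE_neg_neg_iff, neg_div_neg_eq] using hneg
  · exact qamLE_iff_monotoneOn_div_of_strictAntiOn_of_strictMonoOn hI hfd hgd hg'0 hfa hgm

end QuasiArithmeticMean

/-- for differentiable `f, g` with nonvanishing derivatives and of
opposite monotonicity, `A^[f] ≤ A^[g]` iff `f'/g'` is non-decreasing on `I`. -/
theorem qam_le_iff_deriv_ratio_monotone_opposite_monotonicity
    (I : Set ℝ) (hI : I.OrdConnected) (hInontriv : ∃ x ∈ I, ∃ y ∈ I, x < y)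
    (f g f' g' : ℝ → ℝ)
    (hfd : ∀ x ∈ I, HasDerivWithinAt f (f' x) I x)
    (hgd : ∀ x ∈ I, HasDerivWithinAt g (g' x) I x)
    (hf'0 : ∀ x ∈ I, f' x ≠ 0) (hg'0 : ∀ x ∈ I, g' x ≠ 0)
    (hopp : (StrictMonoOn f I ∧ StrictAntiOn g I) ∨
            (StrictAntiOn f I ∧ StrictMonoOn g I)) :
    qamLE I f g ↔ MonotoneOn (fun x => f' x / g' x) I :=
  qam_le_iff_deriv_ratio_monotone_opposite_monotonicity_general hI hfd hgd hg'0 hopp
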